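/- Let n ≥ 1 and N = (1, 0, …, 0, −1) ∈ ℤ^{n+1}. The extreme points of the flow polytope F_n(N) are exactly the following flows: for each subset {v_1 < v_2 < ⋯ < v_m} of {1, …, n−1}, the flow assigning value 1 to each edge of the path 0 → v_1 → v_2 → ⋯ → v_m → n and value 0 to every other edge. In particular F_n(1, 0, …, 0, −1) has exactly 2^{n−1} extreme points. -/

import Mathlib

open Finset

/-- The entropy-like function `h(t) = (t+1)·log(t+1) − t·log t` (with `h 0 = 0`
since `Real.log 0 = 0`). -/
noncomputable def entH (t : ℝ) : ℝ := (t + 1) * Real.log (t + 1) - t * Real.log t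

/-- `f` is an integer flow on the complete graph `k_{n+1}` with netflow `N`:
`f i j` is the flow on the edge `(i,j)` for `i < j`, it vanishes for `i ≥ j`,
and the netflow at each vertex `i` is `N i`. -/
def IsIntFlow (n : ℕ) (N : Fin (n + 1) → ℤ) (f : Fin (n + 1) → Fin (n + 1) → ℕ) : Prop :=
  (∀ i j : Fin (n + 1), ¬ i < j → f i j = 0) ∧
  ∀ i : Fin (n + 1),
    (∑ j : Fin (n + 1), if i < j then (f i j : ℤ) else 0) -
      (∑ k : Fin (n + 1), if k < i then (f k i : ℤ) else 0) = N i

/-- The Kostant partition function: the number of integer flows on the complete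
graph `k_{n+1}` with netflow `N`. -/
noncomputable def Kn (n : ℕ) (N : Fin (n + 1) → ℤ) : ℕ :=
  Nat.card {f : Fin (n + 1) → Fin (n + 1) → ℕ // IsIntFlow n N f}

/-- The flow polytope of the complete graph `k_{n+1}` with netflow `N`. -/
def FlowPolytope (n : ℕ) (N : Fin (n + 1) → ℝ) : Set (Fin (n + 1) → Fin (n + 1) → ℝ) :=
  {f | (∀ i j : Fin (n + 1), i < j → 0 ≤ f i j) ∧
    (∀ i j : Fin (n + 1), ¬ i < j → f i j = 0) ∧
    ∀ i : Fin (n + 1),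
      (∑ j : Fin (n + 1), if i < j then f i j else 0) -
        (∑ k : Fin (n + 1), if k < i then f k i else 0) = N i}

/-- The flow entropy `H(f)`. -/
noncomputable def flowEntropy (n : ℕ) (N : Fin (n + 1) → ℝ)
    (f : Fin (n + 1) → Fin (n + 1) → ℝ) : ℝ :=
  (∑ i : Fin (n + 1), ∑ j : Fin (n + 1), if i < j then entH (f i j) else 0) +
  ∑ j : Fin (n + 1), if 0 < (j : ℕ) ∧ (j : ℕ) < n then
    entH (∑ i : Fin (n + 1), if i < j then (N i - f i j) else 0) else 0

/-- Partial sums `s_k = N_0 + ⋯ + N_k`. -/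
def sPartial (n : ℕ) (N : Fin (n + 1) → ℤ) (k : ℕ) : ℤ :=
  ∑ j : Fin (n + 1), if (j : ℕ) ≤ k then N j else 0

/-- Extend `(N_0,…,N_{n−1})` to the netflow vector `(N_0,…,N_{n−1},−∑ N_i)`. -/
def extend (n : ℕ) (N : Fin n → ℤ) : Fin (n + 1) → ℤ := Fin.snoc N (-∑ i, N i)

/-- The vertex set `{0} ∪ S ∪ {n}` of the path determined by the set `S` of
internal vertices. -/
def pathVerts (n : ℕ) (S : Finset (Fin (n + 1))) : Finset (Fin (n + 1)) :=
  insert 0 (insert (Fin.last n) S)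

/-- The unit flow along the path `0 → v_1 → ⋯ → v_m → n`, where
`v_1 < ⋯ < v_m` are the elements of `S`: the edges of the path are the pairs of
consecutive elements of `{0} ∪ S ∪ {n}`. -/
def pathFlow (n : ℕ) (S : Finset (Fin (n + 1))) : Fin (n + 1) → Fin (n + 1) → ℝ :=
  fun i j =>
    if i ∈ pathVerts n S ∧ j ∈ pathVerts n S ∧ i < j ∧
        ∀ k ∈ pathVerts n S, ¬(i < k ∧ k < j) then 1 else 0


/-- `i` and `j` are consecutive elements of `P`. -/
def ConsIn {n : ℕ} (P : Finset (Fin (n + 1))) (i j : Fin (n + 1)) : Prop :=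
  i ∈ P ∧ j ∈ P ∧ i < j ∧ ∀ k ∈ P, ¬(i < k ∧ k < j)

lemma pathFlow_of_cons {n : ℕ} {S : Finset (Fin (n + 1))} {i j : Fin (n + 1)}
    (h : ConsIn (pathVerts n S) i j) : pathFlow n S i j = 1 := if_pos h

lemma pathFlow_of_not_cons {n : ℕ} {S : Finset (Fin (n + 1))} {i j : Fin (n + 1)}
    (h : ¬ ConsIn (pathVerts n S) i j) : pathFlow n S i j = 0 := if_neg h

lemma consIn_right_unique {n : ℕ} {P : Finset (Fin (n + 1))} {i j j' : Fin (n + 1)}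
    (h : ConsIn P i j) (h' : ConsIn P i j') : j' = j := by
  obtain ⟨_, hj, hij, hk⟩ := h
  obtain ⟨_, hj', hij', hk'⟩ := h'
  rcases lt_trichotomy j j' with hlt | heq | hlt
  · exact absurd ⟨hij, hlt⟩ (hk' j hj)
  · exact heq.symm
  · exact absurd ⟨hij', hlt⟩ (hk j' hj')

lemma consIn_left_unique {n : ℕ} {P : Finset (Fin (n + 1))} {i i' j : Fin (n + 1)}
    (h : ConsIn P i j) (h' : ConsIn P i' j) : i' = i := by
  obtain ⟨hj, _, hij, hk⟩ := h
  obtain ⟨hj', _, hij', hk'⟩ := h'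
  rcases lt_trichotomy i i' with hlt | heq | hlt
  · exact absurd ⟨hlt, hij'⟩ (hk i' hj')
  · exact heq.symm
  · exact absurd ⟨hlt, hij⟩ (hk' i hj)

lemma exists_consIn_right {n : ℕ} {P : Finset (Fin (n + 1))} {i : Fin (n + 1)}
    (hi : i ∈ P) (hl : Fin.last n ∈ P) (hne : i ≠ Fin.last n) : ∃ j, ConsIn P i j := by
  have hlt : i < Fin.last n := lt_of_le_of_ne (Fin.le_last i) hne
  have hne' : (P.filter (fun k => i < k)).Nonempty := ⟨Fin.last n, by simp [hl, hlt]⟩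
  obtain ⟨j, hj, hmin⟩ := Finset.exists_min_image (P.filter (fun k => i < k)) id hne'
  rw [Finset.mem_filter] at hj
  refine ⟨j, hi, hj.1, hj.2, ?_⟩
  rintro k hk ⟨h1, h2⟩
  exact absurd h2 (not_lt.2 (hmin k (by simp [hk, h1])))

lemma exists_consIn_left {n : ℕ} {P : Finset (Fin (n + 1))} {i : Fin (n + 1)}
    (hi : i ∈ P) (hl : (0 : Fin (n + 1)) ∈ P) (hne : i ≠ 0) : ∃ j, ConsIn P j i := by
  have hlt : 0 < i := Fin.pos_iff_ne_zero.2 hne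
  have hne' : (P.filter (fun k => k < i)).Nonempty := ⟨0, by simp [hl, hlt]⟩
  obtain ⟨j, hj, hmax⟩ := Finset.exists_max_image (P.filter (fun k => k < i)) id hne'
  rw [Finset.mem_filter] at hj
  refine ⟨j, hj.1, hi, hj.2, ?_⟩
  rintro k hk ⟨h1, h2⟩
  exact absurd h1 (not_lt.2 (hmax k (by simp [hk, h2])))

/-- Outflow at a path vertex of a flow supported on the path. -/
lemma out_single {n : ℕ} {P : Finset (Fin (n + 1))} {g : Fin (n + 1) → Fin (n + 1) → ℝ}
    (hg : ∀ i j, ¬ ConsIn P i j → g i j = 0) {i j : Fin (n + 1)} (h : ConsIn P i j) :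
    (∑ j : Fin (n + 1), if i < j then g i j else 0) = g i j := by
  rw [Finset.sum_eq_single j]
  · rw [if_pos h.2.2.1]
  · intro b _ hb
    rw [hg i b (fun h' => hb (consIn_right_unique h h')), ite_self]
  · intro h'; exact absurd (Finset.mem_univ _) h'

lemma in_single {n : ℕ} {P : Finset (Fin (n + 1))} {g : Fin (n + 1) → Fin (n + 1) → ℝ}
    (hg : ∀ i j, ¬ ConsIn P i j → g i j = 0) {i j : Fin (n + 1)} (h : ConsIn P i j) :
    (∑ k : Fin (n + 1), if k < j then g k j else 0) = g i j := by
  rw [Finset.sum_eq_single i]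
  · rw [if_pos h.2.2.1]
  · intro b _ hb
    rw [hg b j (fun h' => hb (consIn_left_unique h h')), ite_self]
  · intro h'; exact absurd (Finset.mem_univ _) h'

lemma out_zero {n : ℕ} {P : Finset (Fin (n + 1))} {g : Fin (n + 1) → Fin (n + 1) → ℝ}
    (hg : ∀ i j, ¬ ConsIn P i j → g i j = 0) {i : Fin (n + 1)} (h : ∀ j, ¬ ConsIn P i j) :
    (∑ j : Fin (n + 1), if i < j then g i j else 0) = 0 :=
  Finset.sum_eq_zero fun j _ => by rw [hg i j (h j), ite_self]

lemma in_zero {n : ℕ} {P : Finset (Fin (n + 1))} {g : Fin (n + 1) → Fin (n + 1) → ℝ}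
    (hg : ∀ i j, ¬ ConsIn P i j → g i j = 0) {j : Fin (n + 1)} (h : ∀ i, ¬ ConsIn P i j) :
    (∑ k : Fin (n + 1), if k < j then g k j else 0) = 0 :=
  Finset.sum_eq_zero fun i _ => by rw [hg i j (h i), ite_self]

lemma zero_mem_pathVerts (n : ℕ) (S : Finset (Fin (n + 1))) : 0 ∈ pathVerts n S := by
  simp [pathVerts]

lemma last_mem_pathVerts (n : ℕ) (S : Finset (Fin (n + 1))) :
    Fin.last n ∈ pathVerts n S := by
  simp [pathVerts]

/-- The net flow vector of the CRY polytope. -/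
abbrev cryN (n : ℕ) : Fin (n + 1) → ℝ := fun i =>
  if (i : ℕ) = 0 then 1 else if (i : ℕ) = n then -1 else 0

lemma pathFlow_mem (n : ℕ) (hn : 1 ≤ n) (S : Finset (Fin (n + 1))) :
    pathFlow n S ∈ FlowPolytope n (cryN n) := by
  have hsupp : ∀ i j, ¬ ConsIn (pathVerts n S) i j → pathFlow n S i j = 0 :=
    fun i j h => pathFlow_of_not_cons h
  refine ⟨?_, ?_, ?_⟩
  · intro i j _
    unfold pathFlow
    split_ifs <;> norm_num
  · intro i j h
    exact hsupp i j fun h' => h h'.2.2.1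
  · intro i
    by_cases hi : i ∈ pathVerts n S
    · by_cases h0 : i = 0
      · subst h0
        have hne : (0 : Fin (n + 1)) ≠ Fin.last n := by
          intro h; have := congrArg Fin.val h; simp at this; omega
        obtain ⟨j, hj⟩ := exists_consIn_right hi (last_mem_pathVerts n S) hne
        rw [out_single hsupp hj, in_zero hsupp (fun k hk => absurd hk.2.2.1 (Fin.not_lt_zero k)),
          pathFlow_of_cons hj]
        simp [cryN]
      · have h0' : (i : ℕ) ≠ 0 := fun h => h0 (Fin.ext h)
        obtain ⟨k, hk⟩ := exists_consIn_left hi (zero_mem_pathVerts n S) h0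
        rw [in_single hsupp hk, pathFlow_of_cons hk]
        by_cases hl : i = Fin.last n
        · subst hl
          rw [out_zero hsupp (fun k hk => absurd hk.2.2.1 (not_lt.2 (Fin.le_last k)))]
          simp [cryN]
          omega
        · have hl' : (i : ℕ) ≠ n := fun h => hl (Fin.ext h)
          obtain ⟨j, hj⟩ := exists_consIn_right hi (last_mem_pathVerts n S) hl
          rw [out_single hsupp hj, pathFlow_of_cons hj]
          simp [cryN, h0', hl']
    · have h0 : (i : ℕ) ≠ 0 := by
        intro h; exact hi ((Fin.ext h : i = 0) ▸ zero_mem_pathVerts n S)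
      have hl : (i : ℕ) ≠ n := by
        intro h; exact hi ((Fin.ext h : i = Fin.last n) ▸ last_mem_pathVerts n S)
      rw [out_zero hsupp (fun j hj => hi hj.1), in_zero hsupp (fun j hj => hi hj.2.1)]
      simp [cryN, h0, hl]

/-- A flow supported on a path is the unit flow along that path. -/
lemma eq_pathFlow_of_supp (n : ℕ) (S : Finset (Fin (n + 1)))
    (g : Fin (n + 1) → Fin (n + 1) → ℝ) (hgm : g ∈ FlowPolytope n (cryN n))
    (hg : ∀ i j, ¬ ConsIn (pathVerts n S) i j → g i j = 0) : g = pathFlow n S := by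
  obtain ⟨_, _, hcons⟩ := hgm
  have key : ∀ m : ℕ, ∀ i j : Fin (n + 1), (i : ℕ) = m → ConsIn (pathVerts n S) i j →
      g i j = 1 := by
    intro m
    induction m using Nat.strong_induction_on with
    | _ m ih =>
      intro i j him hij
      have hc := hcons i
      rw [out_single hg hij] at hc
      by_cases h0 : i = 0
      · subst h0
        rw [in_zero hg (fun k hk => absurd hk.2.2.1 (Fin.not_lt_zero k))] at hc
        simpa [cryN] using hc
      · have h0' : (i : ℕ) ≠ 0 := fun h => h0 (Fin.ext h)
        obtain ⟨k, hk⟩ := exists_consIn_left hij.1 (zero_mem_pathVerts n S) h0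
        have hki : (k : ℕ) < i := hk.2.2.1
        have hl : (i : ℕ) ≠ n := by
          have h1 : (i : ℕ) < j := hij.2.2.1
          have h2 := j.isLt
          omega
        rw [in_single hg hk, ih k (by omega) k i rfl hk] at hc
        simp only [cryN, h0', hl, if_false] at hc
        linarith
  funext i j
  by_cases h : ConsIn (pathVerts n S) i j
  · rw [pathFlow_of_cons h, key i i j rfl h]
  · rw [pathFlow_of_not_cons h, hg i j h]

lemma flow_nonneg {n : ℕ} {N : Fin (n + 1) → ℝ} {f : Fin (n + 1) → Fin (n + 1) → ℝ}
    (hf : f ∈ FlowPolytope n N) (i j : Fin (n + 1)) : 0 ≤ f i j := by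
  by_cases h : i < j
  · exact hf.1 i j h
  · exact (hf.2.1 i j h).ge

lemma pathFlow_extreme (n : ℕ) (hn : 1 ≤ n) (S : Finset (Fin (n + 1))) :
    pathFlow n S ∈ Set.extremePoints ℝ (FlowPolytope n (cryN n)) := by
  rw [mem_extremePoints]
  refine ⟨pathFlow_mem n hn S, ?_⟩
  rintro x hx y hy ⟨a, b, ha, hb, _, hxy⟩
  have hz : ∀ i j, ¬ ConsIn (pathVerts n S) i j → x i j = 0 ∧ y i j = 0 := by
    intro i j h
    have h1 : a * x i j + b * y i j = 0 := by
      rw [← pathFlow_of_not_cons h, ← hxy]; simp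
    have hx0 := flow_nonneg hx i j
    have hy0 := flow_nonneg hy i j
    have h2 := mul_nonneg ha.le hx0
    have h3 := mul_nonneg hb.le hy0
    constructor
    · exact (mul_eq_zero.1 (by linarith : a * x i j = 0)).resolve_left ha.ne'
    · exact (mul_eq_zero.1 (by linarith : b * y i j = 0)).resolve_left hb.ne'
  exact ⟨eq_pathFlow_of_supp n S x hx fun i j h => (hz i j h).1,
    eq_pathFlow_of_supp n S y hy fun i j h => (hz i j h).2⟩

/-- From any reachable vertex there is a path to the sink in the support of the flow. -/
lemma exists_path {n : ℕ} {f : Fin (n + 1) → Fin (n + 1) → ℝ}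
    (hf : f ∈ FlowPolytope n (cryN n)) :
    ∀ m : ℕ, ∀ v : Fin (n + 1), n - (v : ℕ) = m → (v = 0 ∨ ∃ u, 0 < f u v) →
      ∃ P : Finset (Fin (n + 1)), v ∈ P ∧ Fin.last n ∈ P ∧ (∀ w ∈ P, v ≤ w) ∧
        ∀ i j, ConsIn P i j → 0 < f i j := by
  intro m
  induction m using Nat.strong_induction_on with
  | _ m ih =>
    intro v hvm hv
    by_cases hl : v = Fin.last n
    · refine ⟨{v}, by simp, by simp [hl], by simp, ?_⟩
      rintro i j ⟨hi, hj, hij, _⟩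
      rw [Finset.mem_singleton] at hi hj
      rw [hi, hj] at hij
      exact absurd hij (lt_irrefl _)
    · have hl' : (v : ℕ) ≠ n := fun h => hl (Fin.ext h)
      have hc := hf.2.2 v
      have hin : 0 ≤ ∑ k : Fin (n + 1), if k < v then f k v else 0 :=
        Finset.sum_nonneg fun k _ => by
          split_ifs
          · exact flow_nonneg hf k v
          · exact le_rfl
      have hout : 0 < ∑ j : Fin (n + 1), if v < j then f v j else 0 := by
        by_cases h0 : v = 0
        · have : cryN n v = 1 := by simp [cryN, h0]
          rw [this] at hc
          linarith
        · have h0' : (v : ℕ) ≠ 0 := fun h => h0 (Fin.ext h)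
          have : cryN n v = 0 := by simp [cryN, h0', hl']
          rw [this] at hc
          obtain ⟨u, hu⟩ := hv.resolve_left h0
          have huv : u < v := by
            by_contra h
            rw [hf.2.1 u v h] at hu
            exact lt_irrefl _ hu
          have h1 : (if u < v then f u v else 0) ≤
              ∑ k : Fin (n + 1), if k < v then f k v else 0 :=
            Finset.single_le_sum (f := fun k => if k < v then f k v else 0)
              (fun k _ => by
                split_ifs
                · exact flow_nonneg hf k v
                · exact le_rfl) (Finset.mem_univ u)
          rw [if_pos huv] at h1
          linarith
      obtain ⟨w, _, hw⟩ := Finset.exists_lt_of_sum_lt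
        (s := Finset.univ) (f := fun _ : Fin (n + 1) => (0 : ℝ))
        (g := fun j => if v < j then f v j else 0) (by simpa using hout)
      have hvw : v < w := by
        by_contra h
        simp [h] at hw
      simp only [hvw, if_true] at hw
      have hvw' : (v : ℕ) < w := hvw
      have hwn := w.isLt
      obtain ⟨P, hwP, hlP, hmin, hP⟩ := ih (n - w) (by omega) w rfl (Or.inr ⟨v, hw⟩)
      refine ⟨insert v P, by simp, by simp [hlP], ?_, ?_⟩
      · intro x hx
        rcases Finset.mem_insert.1 hx with rfl | hx
        · exact le_rfl
        · exact hvw.le.trans (hmin x hx)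
      · rintro i j ⟨hi, hj, hij, hk⟩
        have hge : ∀ x ∈ insert v P, v ≤ x := by
          intro x hx
          rcases Finset.mem_insert.1 hx with rfl | hx
          · exact le_rfl
          · exact hvw.le.trans (hmin x hx)
        have hjP : j ∈ P := by
          rcases Finset.mem_insert.1 hj with rfl | hj
          · exact absurd hij (not_lt.2 (hge i hi))
          · exact hj
        rcases Finset.mem_insert.1 hi with rfl | hi
        · have hjw : j = w := by
            rcases (hmin j hjP).lt_or_eq with h | h
            · exact absurd ⟨hvw, h⟩ (hk w (Finset.mem_insert_of_mem hwP))
            · exact h.symm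
          rw [hjw]; exact hw
        · exact hP i j ⟨hi, hjP, hij, fun k hkP => hk k (Finset.mem_insert_of_mem hkP)⟩

lemma exists_eq_pathFlow (n : ℕ) (hn : 1 ≤ n) (f : Fin (n + 1) → Fin (n + 1) → ℝ)
    (hfe : f ∈ Set.extremePoints ℝ (FlowPolytope n (cryN n))) :
    ∃ S : Finset (Fin (n + 1)),
        (∀ v ∈ S, 0 < (v : ℕ) ∧ (v : ℕ) < n) ∧ f = pathFlow n S := by
  rw [mem_extremePoints] at hfe
  obtain ⟨hf, hext⟩ := hfe
  obtain ⟨P, h0P, hlP, _, hP⟩ := exists_path hf n 0 (by simp) (Or.inl rfl)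
  have hPS : pathVerts n ((P.erase 0).erase (Fin.last n)) = P := by
    ext x
    simp only [pathVerts, Finset.mem_insert, Finset.mem_erase]
    constructor
    · rintro (rfl | rfl | h)
      · exact h0P
      · exact hlP
      · exact h.2.2
    · intro h
      tauto
  refine ⟨(P.erase 0).erase (Fin.last n), ?_, ?_⟩
  · intro v hv
    simp only [Finset.mem_erase] at hv
    exact ⟨Fin.pos_iff_ne_zero.2 hv.2.1, Fin.lt_last_iff_ne_last.2 hv.1⟩
  · set S := (P.erase 0).erase (Fin.last n) with hS
    have hpm := pathFlow_mem n hn S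
    obtain ⟨e, he, hef⟩ : ∃ e : ℝ, 0 < e ∧ ∀ i j, ConsIn P i j → e ≤ f i j := by
      obtain ⟨q, hq⟩ := Finite.exists_min
        (fun q : Fin (n + 1) × Fin (n + 1) => if 0 < f q.1 q.2 then f q.1 q.2 else 1)
      refine ⟨if 0 < f q.1 q.2 then f q.1 q.2 else 1, ?_, fun i j hij => ?_⟩
      · split_ifs with h
        · exact h
        · exact one_pos
      · have := hq (i, j)
        simpa only [hP i j hij, if_true] using this
    have hgm : (fun i j => f i j + e * (f i j - pathFlow n S i j)) ∈
        FlowPolytope n (cryN n) := by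
      refine ⟨?_, ?_, ?_⟩
      · intro i j hij
        have h1 := flow_nonneg hf i j
        have h2 := mul_nonneg he.le h1
        change 0 ≤ f i j + e * (f i j - pathFlow n S i j)
        by_cases h : ConsIn P i j
        · rw [pathFlow_of_cons (hPS.symm ▸ h)]
          have := hef i j h
          linarith
        · rw [pathFlow_of_not_cons (hPS.symm ▸ h)]
          linarith
      · intro i j hij
        simp [hf.2.1 i j hij, hpm.2.1 i j hij]
      · intro i
        have h1 := hf.2.2 i
        have h2 := hpm.2.2 i
        have h3 : ∀ (c : Fin (n + 1) → Prop) [DecidablePred c] (a b : Fin (n + 1) → ℝ),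
            (∑ j, if c j then a j + e * (a j - b j) else 0) =
              (1 + e) * (∑ j, if c j then a j else 0) - e * ∑ j, if c j then b j else 0 := by
          intro c _ a b
          rw [Finset.mul_sum, Finset.mul_sum, ← Finset.sum_sub_distrib]
          refine Finset.sum_congr rfl fun j _ => ?_
          split_ifs <;> ring
        rw [h3 (fun j => i < j) (fun j => f i j) (fun j => pathFlow n S i j),
          h3 (fun j => j < i) (fun j => f j i) (fun j => pathFlow n S j i)]
        linear_combination (1 + e) * h1 - e * h2
    have hseg : f ∈ openSegment ℝ (pathFlow n S)
        (fun i j => f i j + e * (f i j - pathFlow n S i j)) := by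
      have hpos : 0 < 1 + e := by linarith
      refine ⟨e / (1 + e), 1 / (1 + e), by positivity, by positivity, ?_, ?_⟩
      · field_simp
        ring
      · funext i j
        simp only [Pi.add_apply, Pi.smul_apply, smul_eq_mul]
        field_simp
        ring
    exact (hext _ hpm _ hgm hseg).1.symm

lemma pathFlow_injOn (n : ℕ) (S T : Finset (Fin (n + 1)))
    (hS : ∀ v ∈ S, 0 < (v : ℕ) ∧ (v : ℕ) < n) (hT : ∀ v ∈ T, 0 < (v : ℕ) ∧ (v : ℕ) < n)
    (h : pathFlow n S = pathFlow n T) : S ⊆ T := by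
  intro v hv
  have hv0 := hS v hv
  have hne : v ≠ Fin.last n := by
    intro h; rw [h] at hv0; simp at hv0
  have hvP : v ∈ pathVerts n S := by simp [pathVerts, hv]
  obtain ⟨j, hj⟩ := exists_consIn_right hvP (last_mem_pathVerts n S) hne
  have h1 := pathFlow_of_cons hj
  rw [h] at h1
  have hc : ConsIn (pathVerts n T) v j := by
    by_contra hc
    rw [pathFlow_of_not_cons hc] at h1
    exact zero_ne_one h1
  have h2 := hc.1
  simp only [pathVerts, Finset.mem_insert] at h2
  rcases h2 with h2 | h2 | h2
  · rw [h2] at hv0; simp at hv0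
  · exact absurd h2 hne
  · exact h2

/-- **Proposition (vertices of the CRY polytope).** The extreme points of
`F_n(1,0,…,0,−1)` are exactly the unit flows along paths `0 → v_1 → ⋯ → v_m → n`
over subsets `{v_1 < ⋯ < v_m} ⊆ {1,…,n−1}`; in particular there are exactly
`2^{n−1}` of them. -/
theorem extremePoints_CRY (n : ℕ) (hn : 1 ≤ n) :
    Set.extremePoints ℝ
        (FlowPolytope n fun i =>
          if (i : ℕ) = 0 then 1 else if (i : ℕ) = n then -1 else 0) =
      {f | ∃ S : Finset (Fin (n + 1)),
        (∀ v ∈ S, 0 < (v : ℕ) ∧ (v : ℕ) < n) ∧ f = pathFlow n S} ∧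
    (Set.extremePoints ℝ
        (FlowPolytope n fun i =>
          if (i : ℕ) = 0 then 1 else if (i : ℕ) = n then -1 else 0)).ncard =
      2 ^ (n - 1) := by
  have hset : Set.extremePoints ℝ (FlowPolytope n (cryN n)) =
      {f | ∃ S : Finset (Fin (n + 1)),
        (∀ v ∈ S, 0 < (v : ℕ) ∧ (v : ℕ) < n) ∧ f = pathFlow n S} := by
    ext f
    constructor
    · exact exists_eq_pathFlow n hn f
    · rintro ⟨S, _, rfl⟩
      exact pathFlow_extreme n hn S
  refine ⟨hset, ?_⟩
  have himg : {f | ∃ S : Finset (Fin (n + 1)),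
        (∀ v ∈ S, 0 < (v : ℕ) ∧ (v : ℕ) < n) ∧ f = pathFlow n S} =
      Set.image (pathFlow n) (↑((Finset.Ioo (0 : Fin (n + 1)) (Fin.last n)).powerset) :
        Set (Finset (Fin (n + 1)))) := by
    ext f
    simp only [Set.mem_setOf_eq, Set.mem_image, Finset.mem_coe, Finset.mem_powerset,
      Finset.subset_iff, Finset.mem_Ioo, Fin.lt_def, Fin.val_zero, Fin.val_last]
    constructor
    · rintro ⟨S, h, rfl⟩
      exact ⟨S, fun {v} hv => h v hv, rfl⟩
    · rintro ⟨S, h, rfl⟩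
      exact ⟨S, fun v hv => h hv, rfl⟩
  have hmem : ∀ S ∈ (↑((Finset.Ioo (0 : Fin (n + 1)) (Fin.last n)).powerset) :
      Set (Finset (Fin (n + 1)))), ∀ v ∈ S, 0 < (v : ℕ) ∧ (v : ℕ) < n := by
    intro S hS v hv
    have := Finset.mem_Ioo.1 (Finset.mem_powerset.1 (Finset.mem_coe.1 hS) hv)
    exact this
  change (Set.extremePoints ℝ (FlowPolytope n (cryN n))).ncard = _
  rw [hset, himg, Set.ncard_image_of_injOn, Set.ncard_coe_finset, Finset.card_powerset,
    Fin.card_Ioo]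
  · simp
  · intro S hS T hT h
    exact Finset.Subset.antisymm (pathFlow_injOn n S T (hmem S hS) (hmem T hT) h)
      (pathFlow_injOn n T S (hmem T hT) (hmem S hS) h.symm)
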